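/- Let A be a finite nonempty set of integers with 0 ∉ A and r_A(n) ≤ 1 for all n ∈ ℤ. Let m be a nonzero integer with r_A(m) = 0, let a* be an element of A of maximum absolute value, set b = 4|a*| + |m|, and let B = A ∪ {−b, b + m}. Then r_B(n) ≤ 1 for all n ∈ ℤ, r_B(m) = 1, and 0 ∉ B. -/

import Mathlib

open Filter Set

/-- `repCount A n` is the number of representations of `n` as `a + a'` with
`a ≤ a'` and `a, a' ∈ A`. -/
noncomputable def repCount (A : Set ℤ) (n : ℤ) : ℕ :=
  {p : ℤ × ℤ | p.1 ∈ A ∧ p.2 ∈ A ∧ p.1 ≤ p.2 ∧ p.1 + p.2 = n}.ncard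

/-- `A` is a unique representation basis of `ℤ` if `r_A(n) = 1` for all `n`. -/
def IsUniqueRepBasis (A : Set ℤ) : Prop := ∀ n : ℤ, repCount A n = 1

/-- `countIn A y x` is the number of elements of `A` in the real interval `[y, x]`. -/
noncomputable def countIn (A : Set ℤ) (y x : ℝ) : ℕ :=
  {a : ℤ | a ∈ A ∧ y ≤ (a : ℝ) ∧ (a : ℝ) ≤ x}.ncard

/-!
Let `s` bound the absolute values on `A`. When `b` and `c = b + m` both exceed `3 * s`, the sums
`-b + -b`, `-b + a`, `-b + c`, `c + a`, `c + c` involving the new elements do not collide with one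
another. All of them lie outside `[-2 * s, 2 * s]`, hence outside `A + A`, except possibly
`-b + c = m`, which is not in `A + A` because `m` has no representation there.
-/

/-- A *Sidon set*: a sum of two elements determines the unordered pair of its summands. It
is the order-free form of `repCount A n ≤ 1` for all `n`; equal summands are allowed. -/
def IsSidon {G : Type*} [Add G] (A : Set G) : Prop :=
  ∀ ⦃a b c d⦄, a ∈ A → b ∈ A → c ∈ A → d ∈ A → a + b = c + d → a = c ∧ b = d ∨ a = d ∧ b = c

section Sidon

open scoped Pointwise

protected theorem IsSidon.insert {G : Type*} [AddCommSemigroup G] [IsLeftCancelAdd G] {A : Set G}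
    {x : G} (hA : IsSidon A) (hx : ∀ y ∈ insert x A, x + y ∉ A + A) : IsSidon (insert x A) := by
  have of_left {y c d : G} (hy : y ∈ insert x A) (hc : c ∈ insert x A) (hd : d ∈ insert x A)
      (h : x + y = c + d) : x = c ∧ y = d ∨ x = d ∧ y = c := by
    rcases hc with rfl | hc
    · exact .inl ⟨rfl, add_left_cancel h⟩
    rcases hd with rfl | hd
    · exact .inr ⟨rfl, add_left_cancel (h.trans (add_comm c d))⟩
    · exact absurd (h ▸ add_mem_add hc hd) (hx y hy)
  intro a b c d ha hb hc hd h
  by_cases hmem : a ∈ A ∧ b ∈ A ∧ c ∈ A ∧ d ∈ A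
  · exact hA hmem.1 hmem.2.1 hmem.2.2.1 hmem.2.2.2 h
  have hx_eq : a = x ∨ b = x ∨ c = x ∨ d = x := by
    grind
  rcases hx_eq with rfl | rfl | rfl | rfl
  · exact of_left hb hc hd h
  · grind [of_left ha hc hd ((add_comm b a).trans h)]
  · grind [of_left hd ha hb h.symm]
  · grind [of_left hc ha hb ((add_comm d c).trans h.symm)]

theorem IsSidon.union_pair {G : Type*} [AddCommGroup G] [LinearOrder G] [IsOrderedAddMonoid G]
    {A : Set G} {s b c : G} (hA : IsSidon A) (hs : 0 ≤ s) (hAs : ∀ a ∈ A, |a| ≤ s)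
    (hb : 3 • s < b) (hc : 3 • s < c) (hbc : -b + c ∉ A + A) : IsSidon (A ∪ {-b, c}) := by
  have bounds : ∀ a ∈ A, -s ≤ a ∧ a ≤ s := fun a ha ↦ abs_le.1 (hAs a ha)
  have hcA : IsSidon (insert c A) := by
    refine hA.insert fun y hy hsum ↦ ?_
    have sum_le : c + y ≤ 2 • s := by
      obtain ⟨u, hu, v, hv, huv⟩ := hsum
      grind
    have lt_sum : 2 • s < c + y := by
      grind
    exact lt_sum.not_ge sum_le
  have le_sum : ∀ z ∈ insert c A + insert c A, -(2 • s) ≤ z := by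
    rintro _ ⟨u, hu, v, hv, rfl⟩
    grind
  have mem_or_le_sum : ∀ z ∈ insert c A + insert c A, z ∈ A + A ∨ c - s ≤ z := by
    rintro _ ⟨u, hu, v, hv, rfl⟩
    grind [Set.add_mem_add]
  have hbcA : IsSidon (insert (-b) (insert c A)) := by
    refine hcA.insert fun y hy hsum ↦ ?_
    rcases hy with rfl | rfl | hy
    · have : -b + -b < -(2 • s) := by grind
      exact this.not_ge (le_sum _ hsum)
    · have : -b + y < y - s := by grind
      exact (mem_or_le_sum _ hsum).elim hbc this.not_ge
    · have : -b + y < -(2 • s) := by grind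
      exact this.not_ge (le_sum _ hsum)
  rwa [union_comm, insert_union, singleton_union]

theorem finite_setOf_rep {A : Set ℤ} (hA : A.Finite) (n : ℤ) :
    {p : ℤ × ℤ | p.1 ∈ A ∧ p.2 ∈ A ∧ p.1 ≤ p.2 ∧ p.1 + p.2 = n}.Finite :=
  (hA.prod hA).subset fun _ hp ↦ ⟨hp.1, hp.2.1⟩

theorem repCount_eq_zero_iff {A : Set ℤ} (hA : A.Finite) {n : ℤ} :
    repCount A n = 0 ↔ n ∉ A + A := by
  rw [repCount, ncard_eq_zero (finite_setOf_rep hA n), eq_empty_iff_forall_notMem]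
  refine ⟨?_, fun hn p ⟨h₁, h₂, _, h⟩ ↦ hn ⟨p.1, h₁, p.2, h₂, h⟩⟩
  rintro hn ⟨a, ha, b, hb, rfl⟩
  rcases le_total a b with hab | hba
  · exact hn (a, b) ⟨ha, hb, hab, rfl⟩
  · exact hn (b, a) ⟨hb, ha, hba, add_comm b a⟩

theorem forall_repCount_le_one_iff_isSidon {A : Set ℤ} (hA : A.Finite) :
    (∀ n, repCount A n ≤ 1) ↔ IsSidon A := by
  simp only [repCount, ncard_le_one (finite_setOf_rep hA _)]
  constructor
  · intro h
    have eq_of_le {a b c d : ℤ} (ha : a ∈ A) (hb : b ∈ A) (hc : c ∈ A) (hd : d ∈ A)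
        (hab : a ≤ b) (hcd : c ≤ d) (hsum : a + b = c + d) : a = c ∧ b = d :=
      Prod.ext_iff.1 (h (c + d) (a, b) ⟨ha, hb, hab, hsum⟩ (c, d) ⟨hc, hd, hcd, rfl⟩)
    intro a b c d ha hb hc hd hsum
    rcases le_total a b with hab | hba <;> rcases le_total c d with hcd | hdc
    · exact .inl (eq_of_le ha hb hc hd hab hcd hsum)
    · exact .inr (eq_of_le ha hb hd hc hab hdc (by lia))
    · exact .inr (eq_of_le hb ha hc hd hba hcd (by lia)).symm
    · exact .inl (eq_of_le hb ha hd hc hba hdc (by lia)).symm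
  · rintro hS n ⟨a, b⟩ ⟨ha, hb, hab, rfl⟩ ⟨c, d⟩ ⟨hc, hd, hcd, hsum⟩
    rcases hS ha hb hc hd hsum.symm with ⟨rfl, rfl⟩ | ⟨rfl, rfl⟩
    · rfl
    · exact Prod.ext (le_antisymm hab hcd) (le_antisymm hcd hab)

theorem repCount_union_pair_general {A : Set ℤ} {s m b : ℤ} (hs : 0 ≤ s)
    (hAs : ∀ a ∈ A, |a| ≤ s) (h0 : 0 ∉ A) (hA : ∀ n, repCount A n ≤ 1) (hmA : repCount A m = 0)
    (hb : 3 * s < b) (hbm : 3 * s < b + m) :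
    (∀ n, repCount (A ∪ {-b, b + m}) n ≤ 1) ∧ repCount (A ∪ {-b, b + m}) m = 1 ∧
      0 ∉ A ∪ {-b, b + m} := by
  have hAfin : A.Finite := (finite_Icc (-s) s).subset fun a ha ↦ abs_le.1 (hAs a ha)
  have hBfin : (A ∪ {-b, b + m}).Finite := hAfin.union (toFinite _)
  have hm : -b + (b + m) = m := neg_add_cancel_left b m
  have hB : ∀ n, repCount (A ∪ {-b, b + m}) n ≤ 1 := by
    rw [forall_repCount_le_one_iff_isSidon hAfin] at hA
    rw [repCount_eq_zero_iff hAfin] at hmA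
    rw [forall_repCount_le_one_iff_isSidon hBfin]
    exact hA.union_pair hs hAs (by simpa using hb) (by simpa using hbm) (by rwa [hm])
  have hmB : repCount (A ∪ {-b, b + m}) m ≠ 0 := fun h ↦
    (repCount_eq_zero_iff hBfin).1 h ⟨-b, by simp, b + m, by simp, hm⟩
  refine ⟨hB, le_antisymm (hB m) (Nat.one_le_iff_ne_zero.2 hmB), ?_⟩
  rintro (h | h | h)
  · exact h0 h
  · lia
  · rw [mem_singleton_iff] at h
    lia

end Sidon

/-- Adding the pair `{-b, b+m}` with `b = 4|a*| + |m|` to a set `A` with all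
representation counts at most one creates a representation of `m` while keeping
all representation counts at most one and avoiding `0`. -/
theorem repCount_union_pair (A : Finset ℤ) (hne : A.Nonempty) (h0 : (0 : ℤ) ∉ A)
    (hA : ∀ n : ℤ, repCount (↑A : Set ℤ) n ≤ 1)
    (m : ℤ) (hm : m ≠ 0) (hmA : repCount (↑A : Set ℤ) m = 0)
    (astar : ℤ) (hastar : astar ∈ A) (hmax : ∀ a ∈ A, |a| ≤ |astar|)
    (b : ℤ) (hb : b = 4 * |astar| + |m|)
    (B : Set ℤ) (hB : B = (↑A : Set ℤ) ∪ {-b, b + m}) :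
    (∀ n : ℤ, repCount B n ≤ 1) ∧ repCount B m = 1 ∧ (0 : ℤ) ∉ B := by
  have hpos : 0 < |astar| := abs_pos.2 (ne_of_mem_of_not_mem hastar h0)
  rw [hB]
  exact repCount_union_pair_general hpos.le hmax h0 hA hmA (by linarith [abs_nonneg m])
    (by linarith [neg_abs_le m])
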